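/- Let T and X be measurable spaces, 𝕄 a finite signed measure on T, and m : T → (finite signed measures on X) a family such that for every measurable E ⊆ X the map t ↦ (m t)(E) is measurable. Suppose there are a subset B ⊆ X and γ > 0 such that each m t is supported by B with ‖m t‖ ≤ γ. Let κ be the finite signed measure on X defined by κ(E) = ∫_T (m t)(E) d𝕄(t). Then the total variation norm of κ satisfies ‖κ‖ ≤ γ · ‖𝕄‖. -/

import Mathlib

open MeasureTheory

/-- The integral of a real-valued function with respect to a finite signed measure,
defined via the Jordan decomposition: `∫ f dμ = ∫ f dμ⁺ − ∫ f dμ⁻`. -/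
noncomputable def sintegral {X : Type*} [MeasurableSpace X] (μ : SignedMeasure X) (f : X → ℝ) : ℝ :=
  (∫ x, f x ∂μ.toJordanDecomposition.posPart) - ∫ x, f x ∂μ.toJordanDecomposition.negPart

/-- A function is integrable with respect to a finite signed measure `μ` if it is
integrable with respect to the total variation measure `|μ| = μ⁺ + μ⁻`. -/
def SIntegrable {X : Type*} [MeasurableSpace X] (μ : SignedMeasure X) (f : X → ℝ) : Prop :=
  Integrable f μ.totalVariation

/-- The total variation norm of a finite signed measure: `‖μ‖ = |μ|(X)`. -/
noncomputable def tvNorm {X : Type*} [MeasurableSpace X] (μ : SignedMeasure X) : ℝ :=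
  (μ.totalVariation Set.univ).toReal

/-! Let `A` be a measurable set that carries `κ⁺` and is null for `κ⁻`. Then `‖κ‖ = κ A - κ Aᶜ` is
the integral against `𝕄` of `t ↦ m t A - m t Aᶜ`, and `|m t A - m t Aᶜ| ≤ ‖m t‖` for every `t`.
Since one set `A` serves for all `t`, the function `t ↦ ‖m t‖`, which may fail to be measurable,
is never integrated. -/

section TotalVariation

variable {X : Type*} [MeasurableSpace X] (μ : SignedMeasure X)

theorem abs_apply_le_tvNorm (A : Set X) : |μ A| ≤ tvNorm μ :=
  (μ.norm_le_totalVariation A).trans (measureReal_mono (Set.subset_univ A))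

theorem abs_apply_sub_apply_compl_le_tvNorm {A : Set X} (hA : MeasurableSet A) :
    |μ A - μ Aᶜ| ≤ tvNorm μ :=
  calc |μ A - μ Aᶜ| ≤ |μ A| + |μ Aᶜ| := abs_sub _ _
    _ ≤ μ.totalVariation.real A + μ.totalVariation.real Aᶜ :=
      add_le_add (μ.norm_le_totalVariation A) (μ.norm_le_totalVariation Aᶜ)
    _ = tvNorm μ := measureReal_add_measureReal_compl hA

theorem exists_tvNorm_eq_apply_sub_apply_compl :
    ∃ A : Set X, MeasurableSet A ∧ tvNorm μ = μ A - μ Aᶜ := by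
  obtain ⟨N, hN, hpos, hneg⟩ := μ.toJordanDecomposition.mutuallySingular
  set P := μ.toJordanDecomposition.posPart with hP
  set Q := μ.toJordanDecomposition.negPart with hQ
  have hPN : P.real N = 0 := by rw [measureReal_def, hpos, ENNReal.toReal_zero]
  have hQN : Q.real Nᶜ = 0 := by rw [measureReal_def, hneg, ENNReal.toReal_zero]
  have apply_compl : μ Nᶜ = P.real Nᶜ := by
    rw [μ.apply_eq_posPart_real_sub_negPart_real hN.compl, ← hP, ← hQ, hQN, sub_zero]
  have apply_self : μ N = -Q.real N := by
    rw [μ.apply_eq_posPart_real_sub_negPart_real hN, ← hP, ← hQ, hPN, zero_sub]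
  refine ⟨Nᶜ, hN.compl, ?_⟩
  calc tvNorm μ = P.real Set.univ + Q.real Set.univ := measureReal_add_apply
    _ = (P.real N + P.real Nᶜ) + (Q.real N + Q.real Nᶜ) := by
      rw [measureReal_add_measureReal_compl hN, measureReal_add_measureReal_compl hN]
    _ = μ Nᶜ - μ Nᶜᶜ := by
      rw [compl_compl, apply_compl, apply_self, hPN, hQN]
      ring

end TotalVariation

section Integral

variable {T : Type*} [MeasurableSpace T] {μ : SignedMeasure T} {f g : T → ℝ}

theorem sIntegrable_iff_posPart_negPart :
    SIntegrable μ f ↔ Integrable f μ.toJordanDecomposition.posPart ∧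
      Integrable f μ.toJordanDecomposition.negPart :=
  integrable_add_measure

theorem sintegral_sub (hf : SIntegrable μ f) (hg : SIntegrable μ g) :
    sintegral μ (fun t => f t - g t) = sintegral μ f - sintegral μ g := by
  obtain ⟨hf_pos, hf_neg⟩ := sIntegrable_iff_posPart_negPart.mp hf
  obtain ⟨hg_pos, hg_neg⟩ := sIntegrable_iff_posPart_negPart.mp hg
  rw [sintegral, integral_sub hf_pos hg_pos, integral_sub hf_neg hg_neg]
  exact sub_sub_sub_comm _ _ _ _

theorem abs_sintegral_le_integral_abs (hf : SIntegrable μ f) :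
    |sintegral μ f| ≤ ∫ t, |f t| ∂μ.totalVariation := by
  obtain ⟨hf_pos, hf_neg⟩ := sIntegrable_iff_posPart_negPart.mp hf
  calc |sintegral μ f|
      ≤ |∫ t, f t ∂μ.toJordanDecomposition.posPart| +
          |∫ t, f t ∂μ.toJordanDecomposition.negPart| := abs_sub _ _
    _ ≤ ∫ t, |f t| ∂μ.toJordanDecomposition.posPart +
          ∫ t, |f t| ∂μ.toJordanDecomposition.negPart :=
      add_le_add abs_integral_le_integral_abs abs_integral_le_integral_abs
    _ = ∫ t, |f t| ∂μ.totalVariation := (integral_add_measure hf_pos.abs hf_neg.abs).symm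

theorem abs_sintegral_le_of_abs_le (hf : SIntegrable μ f) (hg : SIntegrable μ g)
    (hfg : ∀ᵐ t ∂μ.totalVariation, |f t| ≤ g t) :
    |sintegral μ f| ≤ ∫ t, g t ∂μ.totalVariation :=
  (abs_sintegral_le_integral_abs hf).trans (integral_mono_ae hf.abs hg hfg)

end Integral

theorem stmt10_general {T X : Type*} [MeasurableSpace T] [MeasurableSpace X]
    (𝕄 : SignedMeasure T) (m : T → SignedMeasure X)
    (hmeas : ∀ E : Set X, MeasurableSet E →
      AEStronglyMeasurable (fun t => m t E) 𝕄.totalVariation)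
    {g : T → ℝ} (hg : SIntegrable 𝕄 g)
    (hbound : ∀ᵐ t ∂𝕄.totalVariation, tvNorm (m t) ≤ g t)
    (κ : SignedMeasure X)
    (hκ : ∀ E : Set X, MeasurableSet E → κ E = sintegral 𝕄 fun t => m t E) :
    tvNorm κ ≤ ∫ t, g t ∂𝕄.totalVariation := by
  have hint (E : Set X) (hE : MeasurableSet E) : SIntegrable 𝕄 fun t => m t E :=
    hg.mono' (hmeas E hE) <| hbound.mono fun t ht => (abs_apply_le_tvNorm (m t) E).trans ht
  obtain ⟨A, hA, hκA⟩ := exists_tvNorm_eq_apply_sub_apply_compl κ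
  calc tvNorm κ = sintegral 𝕄 fun t => m t A - m t Aᶜ := by
        rw [hκA, hκ A hA, hκ Aᶜ hA.compl, sintegral_sub (hint A hA) (hint Aᶜ hA.compl)]
    _ ≤ |sintegral 𝕄 fun t => m t A - m t Aᶜ| := le_abs_self _
    _ ≤ ∫ t, g t ∂𝕄.totalVariation :=
      abs_sintegral_le_of_abs_le ((hint A hA).sub (hint Aᶜ hA.compl)) hg <|
        hbound.mono fun t ht => (abs_apply_sub_apply_compl_le_tvNorm (m t) hA).trans ht

/-- With `m t` all supported by `B` with `‖m t‖ ≤ γ`, and `κ` the signed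
measure `E ↦ ∫_T (m t)(E) d𝕄(t)`, one has `‖κ‖ ≤ γ · ‖𝕄‖`. -/
theorem stmt10 {T X : Type*} [MeasurableSpace T] [MeasurableSpace X]
    (𝕄 : SignedMeasure T) (m : T → SignedMeasure X)
    (hmeas : ∀ E : Set X, MeasurableSet E → Measurable fun t => m t E)
    (B : Set X) (γ : ℝ) (hγ : 0 < γ)
    (hsupp : ∀ t, ∃ ν : SignedMeasure B, m t = ν.map (Subtype.val : B → X))
    (hbound : ∀ t, tvNorm (m t) ≤ γ)
    (κ : SignedMeasure X)
    (hκ : ∀ E : Set X, MeasurableSet E → κ E = sintegral 𝕄 fun t => m t E) :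
    tvNorm κ ≤ γ * tvNorm 𝕄 := by
  simpa [tvNorm, measureReal_def, mul_comm] using
    stmt10_general 𝕄 m (fun E hE => (hmeas E hE).aestronglyMeasurable)
      (integrable_const γ) (ae_of_all _ hbound) κ hκ
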